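/- arXiv:math/0101204 — 2 statements merged into one kernel-verified Lean document; each statement's English description precedes it below -/
import Mathlib

section
/- Let p be a prime number and define the set of rational numbers P(p) = {0, 1, 1/16, 9/16} ∪ { r²/(4p) : r ∈ ℤ, 1 ≤ r ≤ p }. Then for every λ ∈ P(p) with λ ≠ 0 and every positive integer n, the rational number λ + n does not belong to P(p). -/
/-- The set `P(p) = {0, 1, 1/16, 9/16} ∪ { r²/(4p) : r ∈ ℤ, 1 ≤ r ≤ p }` of
lowest weights of the irreducible modules of the charge conjugation orbifold. -/
def lowestWeights (p : ℕ) : Set ℚ :=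
  {0, 1, 1/16, 9/16} ∪
    {x : ℚ | ∃ r : ℤ, 1 ≤ r ∧ r ≤ (p : ℤ) ∧ x = (r : ℚ) ^ 2 / (4 * (p : ℚ))}

/-!
Two weights `r²/(4p)` and `s²/(4p)` with `0 ≤ r < s ≤ p` differ by an integer only if
`4p ∣ (s - r)(s + r)`. Then `s - r` and `s + r` are both even, so the prime `p` divides
`(s - r)/2` or `(s + r)/2`; but both lie strictly between `0` and `p`. The case `r = 0` says that
`s²/(4p)` is not a positive integer. Finally `s²/(4p)` is not an odd multiple of `1/16`, because
`4 s² = p c` with `c` odd would force `4 ∣ p`.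
-/

theorem not_four_mul_dvd_sq_sub_sq {p r s : ℤ} (hp : Prime p) (hr : 0 ≤ r) (hrs : r < s)
    (hsp : s ≤ p) : ¬ 4 * p ∣ s ^ 2 - r ^ 2 := by
  rintro ⟨n, hn⟩
  have hparity : Even (s ^ 2 - r ^ 2) := hn ▸ ⟨2 * p * n, by ring⟩
  obtain ⟨a, ha⟩ : Even (s - r) := by
    simpa only [Int.even_sub, Int.even_pow' two_ne_zero] using hparity
  obtain ⟨b, hb⟩ : ∃ b, s + r = b + b := ⟨a + r, by linarith⟩
  have hab : a * b = p * n := by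
    have : s ^ 2 - r ^ 2 = 4 * (a * b) := by
      rw [sq_sub_sq, ha, hb]
      ring
    linarith
  rcases hp.dvd_or_dvd ⟨n, hab⟩ with hpa | hpb
  · exact absurd (Int.le_of_dvd (by omega) hpa) (by omega)
  · exact absurd (Int.le_of_dvd (by omega) hpb) (by omega)

theorem sq_div_four_mul_add_ne_sq_div_four_mul {p : ℕ} (hp : p.Prime) {r s n : ℤ} (hr : 0 ≤ r)
    (hs : 0 ≤ s) (hsp : s ≤ p) (hn : 0 < n) :
    (r : ℚ) ^ 2 / (4 * p) + n ≠ (s : ℚ) ^ 2 / (4 * p) := by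
  intro h
  have hp_pos : (0 : ℤ) < p := by exact_mod_cast hp.pos
  have hdiff : s ^ 2 - r ^ 2 = 4 * p * n := by
    have hp_ne : (p : ℚ) ≠ 0 := by exact_mod_cast hp.ne_zero
    field_simp at h
    have : (s : ℚ) ^ 2 - r ^ 2 = 4 * p * n := by linarith
    exact_mod_cast this
  have hrs : r < s := by
    have : 0 < 4 * p * n := by positivity
    exact lt_of_pow_lt_pow_left₀ 2 hs (by linarith)
  exact not_four_mul_dvd_sq_sub_sq (Nat.prime_iff_prime_int.mp hp) hr hrs hsp ⟨n, hdiff⟩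

theorem sq_div_four_mul_ne_odd_div_sixteen {p : ℕ} (hp : ¬ 4 ∣ p) {c : ℤ} (hc : Odd c) (s : ℤ) :
    (s : ℚ) ^ 2 / (4 * p) ≠ c / 16 := by
  intro h
  have hcross : (p : ℤ) * c = 4 * s ^ 2 := by
    have hp_ne : (p : ℚ) ≠ 0 := by
      intro hp_zero
      exact hp (Nat.cast_eq_zero.mp hp_zero ▸ dvd_zero 4)
    field_simp at h
    have : (p : ℚ) * c = 4 * s ^ 2 := by linarith
    exact_mod_cast this
  have hcoprime : IsCoprime (4 : ℤ) c := by
    simpa using (Int.isCoprime_two_left.mpr hc).pow_left (m := 2)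
  exact hp (by exact_mod_cast hcoprime.dvd_of_dvd_mul_right ⟨s ^ 2, hcross⟩)

theorem nonneg_of_mem_lowestWeights {p : ℕ} {x : ℚ} (hx : x ∈ lowestWeights p) : 0 ≤ x := by
  rcases hx with (rfl | rfl | rfl | rfl) | ⟨r, -, -, rfl⟩ <;> positivity

theorem exists_eq_sq_div_of_mem_lowestWeights_of_one_lt {p : ℕ} {x : ℚ}
    (hx : x ∈ lowestWeights p) (hx_one : 1 < x) :
    ∃ r : ℤ, 1 ≤ r ∧ r ≤ p ∧ x = (r : ℚ) ^ 2 / (4 * p) := by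
  rcases hx with (rfl | rfl | rfl | rfl) | hr
  · norm_num at hx_one
  · norm_num at hx_one
  · norm_num at hx_one
  · norm_num at hx_one
  · exact hr

/-- Let `p` be a prime number.  For every `λ ∈ P(p)` with `λ ≠ 0` and every
positive integer `n`, the rational number `λ + n` is not in `P(p)`. -/
theorem stmt_5 (p : ℕ) (hp : p.Prime) (lam : ℚ) (hlam : lam ∈ lowestWeights p)
    (hne : lam ≠ 0) (n : ℤ) (hn : 1 ≤ n) :
    lam + (n : ℚ) ∉ lowestWeights p := by
  have hp_four : ¬ 4 ∣ p := fun h => by simpa using hp.prime.squarefree 2 h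
  have hlam_pos : 0 < lam := (nonneg_of_mem_lowestWeights hlam).lt_of_ne' hne
  have hn_one : (1 : ℚ) ≤ n := by exact_mod_cast hn
  intro hmem
  obtain ⟨s, hs, hsp, heq⟩ :=
    exists_eq_sq_div_of_mem_lowestWeights_of_one_lt hmem (by linarith)
  rcases hlam with (rfl | rfl | rfl | rfl) | ⟨r, hr, -, rfl⟩
  · exact hne rfl
  · refine sq_div_four_mul_add_ne_sq_div_four_mul hp (r := 0) (n := 1 + n) le_rfl (by omega) hsp
      (by omega) ?_
    simpa using heq
  · refine sq_div_four_mul_ne_odd_div_sixteen hp_four (c := 1 + 16 * n) ⟨8 * n, by ring⟩ s ?_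
    push_cast
    linarith
  · refine sq_div_four_mul_ne_odd_div_sixteen hp_four (c := 9 + 16 * n) ⟨4 + 8 * n, by ring⟩ s ?_
    push_cast
    linarith
  · exact sq_div_four_mul_add_ne_sq_div_four_mul hp (by omega) (by omega) hsp (by omega) heq
end

section
/- Let k be an integer with k ≥ 2 that is not prime. Then there exist integers r and s with 0 ≤ r < s ≤ k such that the rational number (s² − r²)/(4k) is an integer. -/
theorem abs_sub_lt_add_of_pos {G : Type*} [AddCommGroup G] [LinearOrder G] [IsOrderedAddMonoid G]
    {a b : G} (ha : 0 < a) (hb : 0 < b) : |a - b| < a + b :=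
  abs_sub_lt_iff.2
    ⟨(sub_lt_self a hb).trans (lt_add_of_pos_right a hb),
      (sub_lt_self b ha).trans (lt_add_of_pos_left b ha)⟩

section OrderedRing

variable {R : Type*} [CommRing R] [LinearOrder R]

theorem sq_add_sub_sq_abs_sub [IsOrderedRing R] (a b : R) :
    (a + b) ^ 2 - |a - b| ^ 2 = 4 * (a * b) := by
  rw [sq_abs]
  ring

theorem exists_sq_sub_sq_eq_four_mul_of_two_le [IsStrictOrderedRing R] {a b : R}
    (ha : 2 ≤ a) (hb : 2 ≤ b) :
    ∃ r s : R, 0 ≤ r ∧ r < s ∧ s ≤ a * b ∧ s ^ 2 - r ^ 2 = 4 * (a * b) :=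
  ⟨|a - b|, a + b, abs_nonneg _,
    abs_sub_lt_add_of_pos (two_pos.trans_le ha) (two_pos.trans_le hb),
    add_le_mul ha hb, sq_add_sub_sq_abs_sub a b⟩

end OrderedRing

theorem exists_two_le_mul_eq_of_not_prime {n : ℕ} (hn : 2 ≤ n) (hnp : ¬ n.Prime) :
    ∃ a b : ℕ, 2 ≤ a ∧ 2 ≤ b ∧ a * b = n := by
  obtain ⟨a, ⟨b, rfl⟩, two_le_a, a_lt⟩ := Nat.exists_dvd_of_not_prime2 hn hnp
  have one_lt_b : 1 < b := (lt_mul_iff_one_lt_right (two_pos.trans_le two_le_a)).1 a_lt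
  exact ⟨a, b, two_le_a, one_lt_b, rfl⟩

/-- Let `k ≥ 2` be an integer that is not prime.  Then there exist integers
`r, s` with `0 ≤ r < s ≤ k` such that `(s² - r²)/(4k)` is an integer. -/
theorem stmt_6 (k : ℕ) (hk : 2 ≤ k) (hnp : ¬ k.Prime) :
    ∃ r s : ℤ, 0 ≤ r ∧ r < s ∧ s ≤ (k : ℤ) ∧
      ∃ n : ℤ, ((s : ℚ) ^ 2 - (r : ℚ) ^ 2) / (4 * (k : ℚ)) = (n : ℚ) := by
  obtain ⟨a, b, two_le_a, two_le_b, rfl⟩ := exists_two_le_mul_eq_of_not_prime hk hnp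
  obtain ⟨r, s, r_nonneg, r_lt_s, s_le, sq_sub_sq⟩ :=
    exists_sq_sub_sq_eq_four_mul_of_two_le (R := ℤ) (a := a) (b := b)
      (by exact_mod_cast two_le_a) (by exact_mod_cast two_le_b)
  have four_mul_ne_zero : 4 * ((a * b : ℕ) : ℚ) ≠ 0 := by positivity
  have sq_sub_sq_rat : (s : ℚ) ^ 2 - (r : ℚ) ^ 2 = 4 * ((a * b : ℕ) : ℚ) := by
    exact_mod_cast sq_sub_sq
  refine ⟨r, s, r_nonneg, r_lt_s, by exact_mod_cast s_le, 1, ?_⟩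
  rw [sq_sub_sq_rat, div_self four_mul_ne_zero, Int.cast_one]
end
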